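/- arXiv:2201.10501 — 2 statements merged into one kernel-verified Lean document; each statement's English description precedes it below -/
import Mathlib

section
/- Let 𝒢 be a finite connected simple graph with one fixed ribbon structure and basis (b_0, b_0b_1) used for all facet graphs, and let J(𝒢) be the set of Jaeger trees of all facet graphs of 𝒢. Then for every (possibly empty) set {e_1, …, e_r} of directed edges there is at most one Jaeger tree T ∈ J(𝒢) whose set of tail-edges is exactly {e_1, …, e_r}. -/
open scoped Classical Pointwise

namespace SEP

variable {V : Type*} [Fintype V] [DecidableEq V]

/-- The undirected simple graph underlying a set of directed edges. -/
def fromDir (D : Set (V × V)) : SimpleGraph V :=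
  SimpleGraph.fromRel (fun u v => (u, v) ∈ D)

/-- A layering of a simple graph `G`: the layer difference along each edge is at most one,
and the edges with layer difference exactly one form a connected spanning subgraph. -/
structure IsLayering (G : SimpleGraph V) (l : V → ℤ) : Prop where
  step : ∀ ⦃u v⦄, G.Adj u v → |l u - l v| ≤ 1
  conn : (SimpleGraph.fromRel fun u v => G.Adj u v ∧ |l u - l v| = 1).Connected

/-- The facet graph (as a set of directed edges) associated to a layering. -/
def facetDigraph (G : SimpleGraph V) (l : V → ℤ) : Set (V × V) :=
  {p | G.Adj p.1 p.2 ∧ l p.2 - l p.1 = 1}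

/-- `D` is a facet graph of `G`. -/
def IsFacetGraph (G : SimpleGraph V) (D : Set (V × V)) : Prop :=
  ∃ l : V → ℤ, IsLayering G l ∧ D = facetDigraph G l

/-- A ribbon structure on `G`: at each vertex a cyclic permutation of the incident edges,
encoded by the "next neighbour" function `ρ`. -/
structure IsRibbon (G : SimpleGraph V) (ρ : V → V → V) : Prop where
  adj : ∀ ⦃x y⦄, G.Adj x y → G.Adj x (ρ x y)
  cyc : ∀ ⦃x y z⦄, G.Adj x y → G.Adj x z → ∃ k : ℕ, (ρ x)^[k] y = z

/-- One step of the Bernardi tour of the tree with (undirected) edge set `T`: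
from the node–edge pair (x, xy) move to (y, yx⁺) if xy is a tree edge
and to (x, xy⁺) otherwise. -/
noncomputable def tourStep (ρ : V → V → V) (T : Set (Sym2 V)) (p : V × V) : V × V :=
  if s(p.1, p.2) ∈ T then (p.2, ρ p.2 p.1) else (p.1, ρ p.1 p.2)

/-- The tour of the tree `T`, starting at the basis `(b0, b0b1)`. -/
noncomputable def tourSeq (ρ : V → V → V) (T : Set (Sym2 V)) (b0 b1 : V) (n : ℕ) : V × V :=
  (tourStep ρ T)^[n] (b0, b1)

/-- The first time the node–edge pair (x, edge xy) becomes current in the tour of `T`. -/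
noncomputable def firstVisit (ρ : V → V → V) (T : Set (Sym2 V)) (b0 b1 x y : V) : ℕ :=
  sInf {n | tourSeq ρ T b0 b1 n = (x, y)}

/-- The undirected edge set of a set of directed edges. -/
def und (T : Set (V × V)) : Set (Sym2 V) := {e | ∃ p ∈ T, e = s(p.1, p.2)}

/-- `T` is a spanning tree of the digraph `D`, recorded with its orientation. -/
def IsSpanningTreeOf (T D : Set (V × V)) : Prop :=
  T ⊆ D ∧ (fromDir T).IsTree

/-- `T` is a Jaeger tree of the digraph `D` with respect to the ribbon structure `ρ` and the
basis `(b0, b1)`: it is a spanning tree of `D` and every directed edge t→h of `D` not in `T`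
is first reached at its tail `t` in the tour of `T`. -/
def IsJaegerTree (ρ : V → V → V) (b0 b1 : V) (D T : Set (V × V)) : Prop :=
  IsSpanningTreeOf T D ∧
    ∀ p ∈ D, s(p.1, p.2) ∉ und T →
      firstVisit ρ (und T) b0 b1 p.1 p.2 < firstVisit ρ (und T) b0 b1 p.2 p.1

/-- The directed edge `p = (t, h)` of `T` is a tail-edge of `T` w.r.t. the base vertex `b0`:
`b0` and `t` lie in the same component of `T - th`. -/
def IsTailEdge (b0 : V) (T : Set (V × V)) (p : V × V) : Prop :=
  p ∈ T ∧ (fromDir (T \ {p})).Reachable b0 p.1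

/-- The set of tail-edges of `T`. -/
def tailEdges (b0 : V) (T : Set (V × V)) : Set (V × V) :=
  {p | IsTailEdge b0 T p}

/-- The number of tail-edges of `T`. -/
noncomputable def numTailEdges (b0 : V) (T : Set (V × V)) : ℕ :=
  Nat.card (tailEdges b0 T)

/-- The ordering `≺` of Jaeger trees of one facet graph: `T' ≺ T` iff their tours first
differ at a current node–edge pair `(t, th)` with the directed edge `th ∉ T'` and `th ∈ T`. -/
def treePrec (ρ : V → V → V) (b0 b1 : V) (T' T : Set (V × V)) : Prop :=
  ∃ n : ℕ, (∀ m ≤ n, tourSeq ρ (und T') b0 b1 m = tourSeq ρ (und T) b0 b1 m) ∧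
    tourSeq ρ (und T) b0 b1 n ∈ T ∧ tourSeq ρ (und T) b0 b1 n ∉ T'

/-- The standard basis vector of `ℝ^V` corresponding to a vertex. -/
noncomputable def stdVec (v : V) : V → ℝ := fun w => if w = v then 1 else 0

/-- The symmetric edge polytope of `G`. -/
noncomputable def symEdgePolytope (G : SimpleGraph V) : Set (V → ℝ) :=
  convexHull ℝ {x | ∃ u v, G.Adj u v ∧ x = stdVec u - stdVec v}

/-- The (root polytope) simplex spanned by a set of directed edges. -/
noncomputable def simplexOf (T : Set (V × V)) : Set (V → ℝ) :=
  convexHull ℝ {x | ∃ p ∈ T, x = stdVec p.2 - stdVec p.1}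

/-- A weight function with base vertex `b0`. -/
structure IsWeight (b0 : V) (f : V → ℝ) : Prop where
  base : f b0 = 1
  lb : ∀ v, v ≠ b0 → -1 ≤ f v
  ub : ∀ v, v ≠ b0 → f v ≤ 0
  total : ∑ v ∈ Finset.univ.erase b0, f v = -1
  indep : LinearIndependent ℚ (fun v : {w : V // w ≠ b0} => f v.1)

/-- The number of lattice points of the `k`-th dilate of the symmetric edge polytope. -/
noncomputable def latticeCount (G : SimpleGraph V) (k : ℕ) : ℕ :=
  Nat.card {x : V → ℤ // (fun v => (x v : ℝ)) ∈ (k : ℝ) • symEdgePolytope G}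

/-- `s` is a side of a bipartition of `G`. -/
def IsBipartition (G : SimpleGraph V) (s : Set V) : Prop :=
  ∀ ⦃u v⦄, G.Adj u v → (u ∈ s ↔ v ∉ s)

/-- A digraph (set of directed edges) is semi-balanced if every cycle of the underlying
undirected graph has the same number of edges oriented in the two cyclic directions. -/
def IsSemiBalanced (D : Set (V × V)) : Prop :=
  ∀ ⦃v : V⦄ (w : (fromDir D).Walk v v), w.IsCycle →
    (w.darts.countP fun d => decide ((d.toProd.1, d.toProd.2) ∈ D)) =
      (w.darts.countP fun d => decide ((d.toProd.2, d.toProd.1) ∈ D))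

/-- `D` is an orientation of (all the edges of) `G`. -/
def IsOrientation (G : SimpleGraph V) (D : Set (V × V)) : Prop :=
  (∀ p ∈ D, G.Adj p.1 p.2) ∧ ∀ ⦃u v⦄, G.Adj u v → ((u, v) ∈ D ↔ (v, u) ∉ D)

/-- The state of the greedy process: the set `H` of included directed edges, the set of
node–edge pairs that have already been current, and the current node–edge pair. -/
structure GreedyState (V : Type*) where
  H : Set (V × V)
  seen : Set (V × V)
  cur : V × V

/-- One step of the (almost-)greedy process in the digraph `D`; `special` is the set of
directed edges that are exceptionally included when first reached at their tail
(`special = ∅` gives the greedy process, `special = {(u,v)}` the u→v-almost greedy one).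
Hidden edges (incident pairs whose edge is absent from `D`) are skipped. -/
noncomputable def greedyStep (D special : Set (V × V)) (ρ : V → V → V)
    (s : GreedyState V) : GreedyState V :=
  let x := s.cur.1
  let y := s.cur.2
  let seen' := s.seen ∪ {s.cur}
  if (y, x) ∈ D then
    -- the current node `x` is the head of the directed edge (y, x)
    if (y, x) ∈ s.seen then ⟨s.H, seen', (x, ρ x y)⟩
    else ⟨s.H ∪ {(y, x)}, seen', (y, ρ y x)⟩
  else if (x, y) ∈ D then
    -- the current node `x` is the tail of the directed edge (x, y)
    if s.cur ∈ special ∧ (y, x) ∉ s.seen then ⟨s.H ∪ {(x, y)}, seen', (y, ρ y x)⟩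
    else if (y, x) ∈ s.seen then ⟨s.H, seen', (y, ρ y x)⟩
    else ⟨s.H, seen', (x, ρ x y)⟩
  else ⟨s.H, seen', (x, ρ x y)⟩

/-- The sequence of states of the (almost-)greedy process started at the basis `(b0, b1)`. -/
noncomputable def greedySeq (D special : Set (V × V)) (ρ : V → V → V) (b0 b1 : V)
    (n : ℕ) : GreedyState V :=
  (greedyStep D special ρ)^[n] ⟨∅, ∅, (b0, b1)⟩

/-- The stopping time of the (almost-)greedy process: the first moment at which a node–edge
pair becomes current for the second time. -/
noncomputable def greedyStopTime (D special : Set (V × V)) (ρ : V → V → V) (b0 b1 : V) : ℕ :=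
  sInf {n | (greedySeq D special ρ b0 b1 n).cur ∈ (greedySeq D special ρ b0 b1 n).seen}

/-- The edge set produced by the (almost-)greedy process. -/
noncomputable def greedyOutput (D special : Set (V × V)) (ρ : V → V → V) (b0 b1 : V) :
    Set (V × V) :=
  (greedySeq D special ρ b0 b1 (greedyStopTime D special ρ b0 b1)).H

/-- The status of the current node–edge pair `p = (x, y)` (node `x`, edge `xy`) with respect
to a facet graph `D` and a tree `T ⊆ D`: `0` if the edge is in the tree oriented y→x,
`1` if it is hidden, `2` if it is oriented x→y in `D` but not in the tree, `3` if it is in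
the tree oriented x→y (and `4` in the remaining case: oriented y→x in `D` but not in `T`). -/
noncomputable def edgeStatus (D T : Set (V × V)) (p : V × V) : ℕ :=
  if (p.2, p.1) ∈ T then 0
  else if (p.1, p.2) ∈ T then 3
  else if (p.1, p.2) ∈ D then 2
  else if (p.2, p.1) ∈ D then 4
  else 1

/-- The quadratic order `<₄` on Jaeger trees (with their facet graphs): the tours, together
with the statuses of the current edges, agree up to step `n`, and at step `n` the status of
the current edge for the first tree is smaller than for the second one. -/
def quadLT (ρ : V → V → V) (b0 b1 : V) (q q' : Set (V × V) × Set (V × V)) : Prop :=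
  ∃ n : ℕ,
    (∀ m < n, tourSeq ρ (und q.2) b0 b1 m = tourSeq ρ (und q'.2) b0 b1 m ∧
      edgeStatus q.1 q.2 (tourSeq ρ (und q.2) b0 b1 m) =
        edgeStatus q'.1 q'.2 (tourSeq ρ (und q'.2) b0 b1 m)) ∧
    tourSeq ρ (und q.2) b0 b1 n = tourSeq ρ (und q'.2) b0 b1 n ∧
    edgeStatus q.1 q.2 (tourSeq ρ (und q.2) b0 b1 n) <
      edgeStatus q'.1 q'.2 (tourSeq ρ (und q'.2) b0 b1 n)

end SEP


namespace SEP

section Helpers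

variable {V : Type*} [Fintype V] [DecidableEq V]

lemma mem_und_iff {T : Set (V × V)} {x y : V} :
    s(x, y) ∈ und T ↔ (x, y) ∈ T ∨ (y, x) ∈ T := by
  constructor
  · rintro ⟨⟨a, b⟩, hp, he⟩
    simp only [Sym2.eq_iff] at he
    rcases he with ⟨rfl, rfl⟩ | ⟨rfl, rfl⟩
    · exact Or.inl hp
    · exact Or.inr hp
  · rintro (h | h)
    · exact ⟨_, h, rfl⟩
    · exact ⟨_, h, Sym2.eq_swap⟩

lemma fromDir_adj {T : Set (V × V)} {x y : V} :
    (fromDir T).Adj x y ↔ x ≠ y ∧ s(x, y) ∈ und T := by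
  rw [mem_und_iff]; simp [fromDir, SimpleGraph.fromRel_adj]

/-- Along paths of the tree `T'` from `b0` the difference `l' - l` never increases. -/
lemma layer_le (G : SimpleGraph V) {l l' : V → ℤ} (hl : IsLayering G l)
    {T T' : Set (V × V)} (hT : T ⊆ facetDigraph G l) (hT' : T' ⊆ facetDigraph G l')
    (hc : (fromDir T').Connected) (b0 : V)
    (htail : tailEdges b0 T' ⊆ T) (v : V) :
    l' v - l v ≤ l' b0 - l b0 := by
  have key : ∀ (v : V) (b : V) (q : (fromDir T').Walk v b), q.IsPath → b = b0 →
      l' v - l v ≤ l' b0 - l b0 := by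
    intro v b q
    induction q with
    | nil => rintro - rfl; exact le_rfl
    | @cons v u b h q ih =>
      intro hp hb
      subst hb
      rw [SimpleGraph.Walk.cons_isPath_iff] at hp
      obtain ⟨hq, hv⟩ := hp
      have ih' := ih hq rfl
      rw [fromDir_adj, mem_und_iff] at h
      obtain ⟨hne, h | h⟩ := h
      · have h1 := (hT' h).2
        have h2 := abs_le.1 (hl.step (hT' h).1)
        simp only at h1 h2
        omega
      · have ht : (u, v) ∈ tailEdges b T' := by
          refine ⟨h, ?_⟩
          have hq' : ∀ e ∈ q.edges, e ∈ (fromDir (T' \ {(u, v)})).edgeSet := by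
            intro e he
            induction e using Sym2.ind with
            | _ a c =>
            have ha := SimpleGraph.Walk.fst_mem_support_of_mem_edges q he
            have hc' := SimpleGraph.Walk.snd_mem_support_of_mem_edges q he
            have hadj := SimpleGraph.Walk.adj_of_mem_edges q he
            have hav : a ≠ v := fun h => hv (h ▸ ha)
            have hcv : c ≠ v := fun h => hv (h ▸ hc')
            rw [fromDir_adj, mem_und_iff] at hadj
            rw [SimpleGraph.mem_edgeSet, fromDir_adj, mem_und_iff]
            refine ⟨hadj.1, hadj.2.imp (fun h => ⟨h, ?_⟩) (fun h => ⟨h, ?_⟩)⟩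
            · simp [hcv]
            · simp [hav]
          exact (SimpleGraph.Walk.reachable (q.transfer _ hq')).symm
        have h1 := (hT' h).2
        have h2 := (hT (htail ht)).2
        simp only at h1 h2
        omega
  obtain ⟨q, hq⟩ := (hc.preconnected v b0).exists_isPath
  exact key v b0 q hq rfl

lemma tourStep_adj {G : SimpleGraph V} {ρ : V → V → V} (hrib : IsRibbon G ρ)
    (E : Set (Sym2 V)) {p : V × V} (hp : G.Adj p.1 p.2) :
    G.Adj (tourStep ρ E p).1 (tourStep ρ E p).2 := by
  unfold tourStep
  split_ifs
  · exact hrib.adj hp.symm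
  · exact hrib.adj hp

lemma rib_surj {G : SimpleGraph V} {ρ : V → V → V} (hrib : IsRibbon G ρ) {x z : V}
    (h : G.Adj x z) : ∃ w, G.Adj x w ∧ ρ x w = z := by
  obtain ⟨k, hk⟩ := hrib.cyc (hrib.adj h) h
  refine ⟨(ρ x)^[k] z, ?_, ?_⟩
  · clear hk
    induction k with
    | zero => exact h
    | succ k ih => rw [Function.iterate_succ_apply']; exact hrib.adj ih
  · exact ((Function.iterate_succ_apply' (ρ x) k z).symm.trans (Function.iterate_succ_apply (ρ x) k z)).trans hk

lemma tour_periodic {G : SimpleGraph V} {ρ : V → V → V} (hrib : IsRibbon G ρ)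
    (E : Set (Sym2 V)) {p : V × V} (hp : G.Adj p.1 p.2) :
    ∃ k, 0 < k ∧ (tourStep ρ E)^[k] p = p := by
  let f : {p : V × V // G.Adj p.1 p.2} → {p : V × V // G.Adj p.1 p.2} :=
    fun p => ⟨tourStep ρ E p.1, tourStep_adj hrib E p.2⟩
  have hs : Function.Surjective f := by
    rintro ⟨⟨x, z⟩, h⟩
    obtain ⟨w, hw, hz⟩ := rib_surj hrib h
    by_cases hE : s(x, w) ∈ E
    · refine ⟨⟨(w, x), hw.symm⟩, Subtype.ext ?_⟩
      have : s(w, x) ∈ E := by rwa [Sym2.eq_swap]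
      simp [f, tourStep, this, hz]
    · refine ⟨⟨(x, w), hw⟩, Subtype.ext ?_⟩
      simp [f, tourStep, hE, hz]
  have hi : Function.Injective f := Finite.injective_iff_surjective.2 hs
  obtain ⟨k, hk, hper⟩ := hi.mem_periodicPts ⟨p, hp⟩
  refine ⟨k, hk, ?_⟩
  have hit : ∀ n, ((f^[n] ⟨p, hp⟩ : {p : V × V // G.Adj p.1 p.2}) : V × V)
      = (tourStep ρ E)^[n] p := by
    intro n
    induction n with
    | zero => rfl
    | succ n ih => rw [Function.iterate_succ_apply', Function.iterate_succ_apply', ← ih]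
  rw [← hit k, hper.eq]

/-- From `(x, y)` with `xy` in the tree, the tour eventually reaches `(y, x)`. -/
lemma tour_return {G : SimpleGraph V} {ρ : V → V → V} (hrib : IsRibbon G ρ)
    {T : Set (V × V)} (hTG : ∀ p ∈ T, G.Adj p.1 p.2) (hT : (fromDir T).IsTree) {x y : V}
    (hxy : s(x, y) ∈ und T) :
    ∃ n, (tourStep ρ (und T))^[n] (x, y) = (y, x) := by
  by_contra hno
  push Not at hno
  have hG : ∀ a b, s(a, b) ∈ und T → G.Adj a b := by
    intro a b h
    rcases mem_und_iff.1 h with h | h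
    · exact hTG _ h
    · exact (hTG _ h).symm
  have hadj : (fromDir T).Adj x y := fromDir_adj.2 ⟨(hG _ _ hxy).ne, hxy⟩
  have hbr := SimpleGraph.isAcyclic_iff_forall_adj_isBridge.1 hT.isAcyclic hadj
  rw [SimpleGraph.isBridge_iff] at hbr
  set H := (fromDir T).deleteEdges {s(x, y)} with hH
  have hnr : ¬ H.Reachable y x := fun h => hbr h.symm
  have hall : ∀ n, H.Reachable y ((tourStep ρ (und T))^[n + 1] (x, y)).1 := by
    intro n
    induction n with
    | zero => simp [tourStep, hxy]
    | succ n ih =>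
      rw [Function.iterate_succ_apply']
      have hne := hno (n + 1)
      generalize (tourStep ρ (und T))^[n + 1] (x, y) = p at ih hne
      obtain ⟨u, w⟩ := p
      by_cases hE : s(u, w) ∈ und T
      · have : tourStep ρ (und T) (u, w) = (w, ρ w u) := by simp [tourStep, hE]
        rw [this]
        refine ih.trans (SimpleGraph.Adj.reachable ?_)
        rw [hH, SimpleGraph.deleteEdges_adj, fromDir_adj]
        refine ⟨⟨(hG _ _ hE).ne, hE⟩, ?_⟩
        intro he
        rw [Set.mem_singleton_iff, Sym2.eq_iff] at he
        rcases he with ⟨rfl, rfl⟩ | ⟨rfl, rfl⟩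
        · exact hnr ih
        · exact hne rfl
      · have : tourStep ρ (und T) (u, w) = (u, ρ u w) := by simp [tourStep, hE]
        rw [this]; exact ih
  obtain ⟨k, hk, hper⟩ := tour_periodic hrib (und T) (p := (x, y)) (hG _ _ hxy)
  obtain ⟨j, rfl⟩ : ∃ j, k = j + 1 := ⟨k - 1, by omega⟩
  have := hall j
  rw [hper] at this
  exact hnr this

/-- The tour of a spanning tree visits every node–edge pair. -/
lemma tour_all {G : SimpleGraph V} {ρ : V → V → V} (hrib : IsRibbon G ρ) {b0 b1 : V}
    (hb : G.Adj b0 b1)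
    {T : Set (V × V)} (hTG : ∀ p ∈ T, G.Adj p.1 p.2) (hT : (fromDir T).IsTree) {x y : V}
    (hxy : G.Adj x y) : ∃ n, tourSeq ρ (und T) b0 b1 n = (x, y) := by
  have hret : ∀ x y, s(x, y) ∈ und T → (∃ n, tourSeq ρ (und T) b0 b1 n = (x, y)) →
      ∃ n, tourSeq ρ (und T) b0 b1 n = (y, x) := by
    rintro x y h ⟨n, hn⟩
    obtain ⟨m, hm⟩ := tour_return hrib hTG hT h
    refine ⟨m + n, ?_⟩
    unfold tourSeq at hn ⊢
    rw [Function.iterate_add_apply, hn, hm]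
  have hstep : ∀ p, (∃ n, tourSeq ρ (und T) b0 b1 n = p) →
      ∃ n, tourSeq ρ (und T) b0 b1 n = tourStep ρ (und T) p := by
    rintro p ⟨n, rfl⟩
    refine ⟨n + 1, ?_⟩
    unfold tourSeq
    rw [Function.iterate_succ_apply']
  have hnext : ∀ x y, (∃ n, tourSeq ρ (und T) b0 b1 n = (x, y)) →
      ∃ n, tourSeq ρ (und T) b0 b1 n = (x, ρ x y) := by
    intro x y h
    by_cases hE : s(x, y) ∈ und T
    · have h2 := hstep _ (hret _ _ hE h)
      have hE' : s(y, x) ∈ und T := by rwa [Sym2.eq_swap]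
      simpa [tourStep, hE'] using h2
    · simpa [tourStep, hE] using hstep _ h
  have hvert : ∀ x y, G.Adj x y → (∃ n, tourSeq ρ (und T) b0 b1 n = (x, y)) →
      ∀ z, G.Adj x z → ∃ n, tourSeq ρ (und T) b0 b1 n = (x, z) := by
    intro x y hxy h z hz
    obtain ⟨k, rfl⟩ := hrib.cyc hxy hz
    clear hz
    induction k with
    | zero => exact h
    | succ k ih => rw [Function.iterate_succ_apply']; exact hnext _ _ ih
  have hreach : ∀ (u v : V) (q : (fromDir T).Walk u v),
      (∀ z, G.Adj u z → ∃ n, tourSeq ρ (und T) b0 b1 n = (u, z)) →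
      (∀ z, G.Adj v z → ∃ n, tourSeq ρ (und T) b0 b1 n = (v, z)) := by
    intro u v q
    induction q with
    | nil => exact id
    | @cons u w v h q ih =>
      intro hu
      apply ih
      have hE := (fromDir_adj.1 h).2
      have hG : G.Adj u w := by
        rcases mem_und_iff.1 hE with h | h
        · exact hTG _ h
        · exact (hTG _ h).symm
      exact hvert w u hG.symm (hret _ _ hE (hu _ hG))
  obtain ⟨q⟩ := hT.connected.preconnected b0 x
  exact hreach b0 x q (hvert b0 b1 hb ⟨0, rfl⟩) y hxy

lemma tour_agree {ρ : V → V → V} {b0 b1 : V} {E E' : Set (Sym2 V)} {n : ℕ}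
    (h : ∀ m < n, (s((tourSeq ρ E b0 b1 m).1, (tourSeq ρ E b0 b1 m).2) ∈ E ↔
      s((tourSeq ρ E b0 b1 m).1, (tourSeq ρ E b0 b1 m).2) ∈ E')) :
    ∀ m ≤ n, tourSeq ρ E b0 b1 m = tourSeq ρ E' b0 b1 m := by
  intro m
  induction m with
  | zero => intro _; rfl
  | succ m ih =>
    intro hm
    have h1 := ih (by omega)
    have h2 := h m (by omega)
    unfold tourSeq at *
    rw [Function.iterate_succ_apply', Function.iterate_succ_apply', ← h1]
    unfold tourStep at *
    simp only [h2]

lemma no_first_diff {G : SimpleGraph V} {ρ : V → V → V} (hrib : IsRibbon G ρ) {b0 b1 : V}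
    (hb : G.Adj b0 b1) {D T T' : Set (V × V)} (hD : ∀ p ∈ D, G.Adj p.1 p.2)
    (hT : IsJaegerTree ρ b0 b1 D T) (hT' : IsJaegerTree ρ b0 b1 D T')
    (htail : tailEdges b0 T ⊆ T') (n : ℕ)
    (hag : ∀ m ≤ n, tourSeq ρ (und T) b0 b1 m = tourSeq ρ (und T') b0 b1 m)
    (hlt : ∀ m < n,
      (s((tourSeq ρ (und T) b0 b1 m).1, (tourSeq ρ (und T) b0 b1 m).2) ∈ und T ↔
        s((tourSeq ρ (und T) b0 b1 m).1, (tourSeq ρ (und T) b0 b1 m).2) ∈ und T'))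
    (hin : s((tourSeq ρ (und T) b0 b1 n).1, (tourSeq ρ (und T) b0 b1 n).2) ∈ und T)
    (hout : s((tourSeq ρ (und T) b0 b1 n).1, (tourSeq ρ (und T) b0 b1 n).2) ∉ und T') :
    False := by
  obtain ⟨⟨x, y⟩, hp⟩ : ∃ p, tourSeq ρ (und T) b0 b1 n = p := ⟨_, rfl⟩
  rw [hp] at hin hout
  simp only at hin hout
  have hne : ∀ m < n,
      s((tourSeq ρ (und T) b0 b1 m).1, (tourSeq ρ (und T) b0 b1 m).2) ≠ s(x, y) := by
    intro m hm he
    have := hlt m hm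
    rw [he] at this
    exact hout (this.1 hin)
  rcases mem_und_iff.1 hin with h | h
  · -- tail-type: show it is a tail-edge
    have hr : ∀ m ≤ n, (fromDir (T \ {(x, y)})).Reachable b0
        (tourSeq ρ (und T) b0 b1 m).1 := by
      intro m
      induction m with
      | zero => intro _; exact SimpleGraph.Reachable.refl _
      | succ m ih =>
        intro hm
        have ih' := ih (by omega)
        have hne' := hne m (by omega)
        have hs : tourSeq ρ (und T) b0 b1 (m + 1)
            = tourStep ρ (und T) (tourSeq ρ (und T) b0 b1 m) := by
          unfold tourSeq; rw [Function.iterate_succ_apply']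
        rw [hs]
        generalize tourSeq ρ (und T) b0 b1 m = p at ih' hne'
        obtain ⟨u, w⟩ := p
        simp only at ih' hne'
        by_cases hE : s(u, w) ∈ und T
        · have : tourStep ρ (und T) (u, w) = (w, ρ w u) := by simp [tourStep, hE]
          rw [this]
          refine ih'.trans (SimpleGraph.Adj.reachable ?_)
          rw [fromDir_adj, mem_und_iff]
          rcases mem_und_iff.1 hE with h | h
          · refine ⟨(hD _ (hT.1.1 h)).ne, Or.inl ⟨h, fun he => hne' ?_⟩⟩
            obtain ⟨rfl, rfl⟩ := Prod.mk.inj he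
            rfl
          · refine ⟨(hD _ (hT.1.1 h)).ne', Or.inr ⟨h, fun he => hne' ?_⟩⟩
            obtain ⟨rfl, rfl⟩ := Prod.mk.inj he
            exact Sym2.eq_swap
        · have : tourStep ρ (und T) (u, w) = (u, ρ u w) := by simp [tourStep, hE]
          rw [this]; exact ih'
    have hx := hr n le_rfl
    rw [hp] at hx
    exact hout (mem_und_iff.2 (Or.inl (htail ⟨h, hx⟩)))
  · have hJ := hT'.2 (y, x) (hT.1.1 h) (by simpa [Sym2.eq_swap] using hout)
    simp only at hJ
    have h1 : firstVisit ρ (und T') b0 b1 x y ≤ n :=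
      Nat.sInf_le (by rw [Set.mem_setOf_eq, ← hag n le_rfl, hp])
    have h2 : tourSeq ρ (und T') b0 b1 (firstVisit ρ (und T') b0 b1 y x) = (y, x) :=
      Nat.sInf_mem (s := {n | tourSeq ρ (und T') b0 b1 n = (y, x)})
        (tour_all hrib hb (fun p hp => hD _ (hT'.1.1 hp)) hT'.1.2 (hD _ (hT.1.1 h)))
    have hm : firstVisit ρ (und T') b0 b1 y x < n := by omega
    apply hne _ hm
    rw [hag _ hm.le, h2]
    exact Sym2.eq_swap

end Helpers

/-- For every (possibly empty) set of directed edges there is at most one Jaeger tree of a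
facet graph of `G` whose set of tail-edges is exactly that set. -/
theorem at_most_one_stick_tree
    {V : Type*} [Fintype V] [DecidableEq V]
    (G : SimpleGraph V) (hG : G.Connected)
    (ρ : V → V → V) (hrib : IsRibbon G ρ) (b0 b1 : V) (hb : G.Adj b0 b1)
    (J : Set (Set (V × V)))
    (hJ : J = {T | ∃ D : Set (V × V), IsFacetGraph G D ∧ IsJaegerTree ρ b0 b1 D T}) :
    ∀ S : Finset (V × V), ∀ T ∈ J, ∀ T' ∈ J,
      tailEdges b0 T = ↑S → tailEdges b0 T' = ↑S → T = T' := by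
  subst hJ
  rintro S T ⟨D, ⟨l, hl, rfl⟩, hT⟩ T' ⟨D', ⟨l', hl', rfl⟩, hT'⟩ hS hS'
  have t1 : tailEdges b0 T ⊆ T' := by
    rw [hS, ← hS']; exact fun p hp => hp.1
  have t2 : tailEdges b0 T' ⊆ T := by
    rw [hS', ← hS]; exact fun p hp => hp.1
  have hll : ∀ v, l' v - l v = l' b0 - l b0 := by
    intro v
    have h1 := layer_le G hl hT.1.1 hT'.1.1 hT'.1.2.connected b0 t2 v
    have h2 := layer_le G hl' hT'.1.1 hT.1.1 hT.1.2.connected b0 t1 v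
    omega
  have hDD : facetDigraph G l' = facetDigraph G l := by
    ext ⟨a, b⟩
    have h1 := hll a
    have h2 := hll b
    simp only [facetDigraph, Set.mem_setOf_eq]
    refine and_congr_right fun _ => ?_
    omega
  rw [hDD] at hT'
  have hD : ∀ p ∈ facetDigraph G l, G.Adj p.1 p.2 := fun p hp => hp.1
  have hall : ∀ n,
      (s((tourSeq ρ (und T) b0 b1 n).1, (tourSeq ρ (und T) b0 b1 n).2) ∈ und T ↔
        s((tourSeq ρ (und T) b0 b1 n).1, (tourSeq ρ (und T) b0 b1 n).2) ∈ und T') := by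
    intro n
    induction n using Nat.strong_induction_on with
    | _ n ih =>
    have hag := tour_agree ih
    constructor
    · intro hin
      by_contra hout
      exact no_first_diff hrib hb hD hT hT' t1 n hag ih hin hout
    · intro hin
      by_contra hout
      rw [hag n le_rfl] at hin hout
      refine no_first_diff hrib hb hD hT' hT t2 n (fun m hm => (hag m hm).symm) ?_ hin hout
      intro m hm
      rw [← hag m hm.le]
      exact (ih m hm).symm
  have hund : ∀ x y, G.Adj x y → (s(x, y) ∈ und T ↔ s(x, y) ∈ und T') := by
    intro x y h
    obtain ⟨n, hn⟩ := tour_all hrib hb (fun p hp => hD _ (hT.1.1 hp)) hT.1.2 h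
    have := hall n
    rwa [hn] at this
  have hanti : ∀ x y, (x, y) ∈ facetDigraph G l → (y, x) ∈ facetDigraph G l → False := by
    intro x y h h'
    have h1 := h.2
    have h2 := h'.2
    simp only at h1 h2
    omega
  ext ⟨x, y⟩
  constructor
  · intro h
    have hd := hT.1.1 h
    rcases mem_und_iff.1 ((hund x y hd.1).1 (mem_und_iff.2 (Or.inl h))) with h' | h'
    · exact h'
    · exact (hanti _ _ hd (hT'.1.1 h')).elim
  · intro h
    have hd := hT'.1.1 h
    rcases mem_und_iff.1 ((hund x y hd.1).2 (mem_und_iff.2 (Or.inl h))) with h' | h'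
    · exact h'
    · exact (hanti _ _ hd (hT.1.1 h')).elim

end SEP
end

section
/- Let C_n be the cycle graph on vertices v_0, …, v_{n−1} (n ≥ 3) with edges v_i v_{i+1} (indices modulo n), with its (unique) ribbon structure and the basis (v_0, v_0v_1). For each fixed i with 0 ≤ i ≤ ⌊(n−1)/2⌋, the total number of Jaeger trees with exactly i tail-edges, summed over all facet graphs of C_n, equals ∑_{j=0}^{i} binom(2j, j) · binom(n − 1 − 2j, i − j). -/
open scoped Classical Pointwise

namespace SEP

section Helpers

set_option linter.unusedSectionVars false

variable {n : ℕ} [NeZero n]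

theorem val_succ_eq (hn : 3 ≤ n) (u : ZMod n) :
    (u + 1).val = if u.val = n - 1 then 0 else u.val + 1 := by
  have : Fact (1 < n) := ⟨by omega⟩
  have h := ZMod.val_lt u
  rw [ZMod.val_add, ZMod.val_one]
  split_ifs with h1
  · rw [h1, Nat.sub_add_cancel (by omega), Nat.mod_self]
  · exact Nat.mod_eq_of_lt (by omega)

theorem ne_succ (hn : 3 ≤ n) (u : ZMod n) : u ≠ u + 1 := by
  intro h
  have h1 := val_succ_eq hn u
  rw [← h] at h1
  split_ifs at h1 <;> omega

theorem ne_succ_succ (hn : 3 ≤ n) (u : ZMod n) : u ≠ u + 1 + 1 := by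
  intro h
  have h1 := val_succ_eq hn u
  have h2 := val_succ_eq hn (u + 1)
  rw [← h] at h2
  split_ifs at h1 h2 <;> omega

/-- The spanning subgraph of the cycle whose edges are the `e — e+1` with `P e`. -/
def cg (P : ZMod n → Prop) : SimpleGraph (ZMod n) :=
  SimpleGraph.fromRel (fun u v => v = u + 1 ∧ P u)

theorem cg_adj (hn : 3 ≤ n) (P : ZMod n → Prop) (u v : ZMod n) :
    (cg P).Adj u v ↔ (v = u + 1 ∧ P u) ∨ (u = v + 1 ∧ P v) := by
  unfold cg
  rw [SimpleGraph.fromRel_adj]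
  constructor
  · exact fun h => h.2
  · intro h
    refine ⟨?_, h⟩
    rintro rfl
    rcases h with h | h <;> exact ne_succ hn _ h.1

theorem edge_inj (hn : 3 ≤ n) {e f : ZMod n} (h : s(e, e + 1) = s(f, f + 1)) : e = f := by
  rw [Sym2.eq_iff] at h
  rcases h with h | h
  · exact h.1
  · exact absurd (h.1.trans (by rw [← h.2])) (ne_succ_succ hn e)

theorem card_edge_cg (hn : 3 ≤ n) (P : ZMod n → Prop) :
    Nat.card (cg P).edgeSet = Nat.card {e // P e} := by
  symm
  refine Nat.card_eq_of_bijective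
    (fun e : {e // P e} => (⟨s(e.1, e.1 + 1), by
      rw [SimpleGraph.mem_edgeSet, cg_adj hn]; exact Or.inl ⟨rfl, e.2⟩⟩ : (cg P).edgeSet)) ⟨?_, ?_⟩
  · intro e f h
    exact Subtype.ext (edge_inj hn (congrArg Subtype.val h))
  · rintro ⟨x, hx⟩
    induction x using Sym2.ind with
    | _ u v =>
      rw [SimpleGraph.mem_edgeSet, cg_adj hn] at hx
      rcases hx with ⟨rfl, h⟩ | ⟨rfl, h⟩
      · exact ⟨⟨u, h⟩, rfl⟩
      · exact ⟨⟨v, h⟩, Subtype.ext Sym2.eq_swap⟩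

theorem reach_low (hn : 3 ≤ n) (P : ZMod n → Prop) (a : ℕ)
    (hP : ∀ u : ZMod n, u.val < a → P u) :
    ∀ m : ℕ, ∀ v : ZMod n, v.val = m → m ≤ a → (cg P).Reachable 0 v := by
  intro m
  induction m with
  | zero =>
    intro v hv _
    rw [ZMod.val_eq_zero] at hv
    rw [hv]
  | succ m ih =>
    intro v hv hm
    have hvn := ZMod.val_lt v
    have h1 : ((m : ℕ) : ZMod n).val = m := ZMod.val_cast_of_lt (by omega)
    have h2 : v = (m : ZMod n) + 1 := by
      apply ZMod.val_injective n
      rw [val_succ_eq hn, h1, if_neg (by omega), hv]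
    refine (ih (m : ZMod n) h1 (by omega)).trans (SimpleGraph.Adj.reachable ?_)
    rw [cg_adj hn]
    exact Or.inl ⟨h2, hP _ (by omega)⟩

theorem reach_high (hn : 3 ≤ n) (P : ZMod n → Prop) (b : ℕ)
    (hP : ∀ u : ZMod n, b < u.val → P u) :
    ∀ m : ℕ, ∀ v : ZMod n, v.val + m + 1 = n → b < v.val → (cg P).Reachable 0 v := by
  intro m
  induction m with
  | zero =>
    intro v hv hb
    have h2 : 0 = v + 1 := by
      apply ZMod.val_injective n
      rw [val_succ_eq hn, if_pos (by omega), ZMod.val_zero]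
    refine SimpleGraph.Adj.reachable ?_
    rw [cg_adj hn]
    exact Or.inr ⟨h2, hP _ hb⟩
  | succ m ih =>
    intro v hv hb
    have h1 : (v + 1).val = v.val + 1 := by
      rw [val_succ_eq hn, if_neg (by omega)]
    refine (ih (v + 1) (by omega) (by omega)).trans (SimpleGraph.Adj.reachable ?_)
    rw [cg_adj hn]
    exact Or.inr ⟨rfl, hP _ hb⟩

theorem reach_iff (hn : 3 ≤ n) (P : ZMod n → Prop) (a b : ZMod n) (hab : a.val < b.val)
    (hP : ∀ u, P u ↔ u ≠ a ∧ u ≠ b) (v : ZMod n) :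
    (cg P).Reachable 0 v ↔ v.val ≤ a.val ∨ b.val < v.val := by
  constructor
  · rintro ⟨w⟩
    have key : ∀ (x y : ZMod n) (w : (cg P).Walk x y), (x.val ≤ a.val ∨ b.val < x.val) →
        (y.val ≤ a.val ∨ b.val < y.val) := by
      intro x y w
      induction w with
      | nil => exact id
      | @cons x y z h w ih =>
        intro hx
        apply ih
        rw [cg_adj hn] at h
        have hb := ZMod.val_lt b
        rcases h with ⟨rfl, h⟩ | ⟨rfl, h⟩
        · rw [hP] at h
          have h1 : x.val ≠ a.val := fun h' => h.1 (ZMod.val_injective n h')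
          rw [val_succ_eq hn]
          split_ifs <;> omega
        · rw [hP] at h
          have h1 : y.val ≠ b.val := fun h' => h.2 (ZMod.val_injective n h')
          have := ZMod.val_lt y
          rw [val_succ_eq hn] at hx
          split_ifs at hx <;> omega
    exact key _ _ w (Or.inl (by rw [ZMod.val_zero]; exact Nat.zero_le _))
  · intro h
    have hv := ZMod.val_lt v
    rcases h with h | h
    · refine reach_low hn P a.val ?_ _ v rfl h
      intro u hu
      rw [hP]
      constructor <;> (rintro rfl; omega)
    · refine reach_high hn P b.val ?_ (n - 1 - v.val) v (by omega) h
      intro u hu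
      rw [hP]
      constructor <;> (rintro rfl; omega)

theorem cg_connected (hn : 3 ≤ n) (P : ZMod n → Prop) (k : ZMod n) (hP : ∀ u, u ≠ k → P u) :
    (cg P).Connected := by
  rw [SimpleGraph.connected_iff_exists_forall_reachable]
  refine ⟨0, fun v => ?_⟩
  have hv := ZMod.val_lt v
  rcases le_or_gt v.val k.val with h | h
  · refine reach_low hn P k.val ?_ _ v rfl h
    intro u hu
    apply hP
    rintro rfl; omega
  · refine reach_high hn P k.val ?_ (n - 1 - v.val) v (by omega) h
    intro u hu
    apply hP
    rintro rfl; omega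

theorem card_compl_add (P : ZMod n → Prop) :
    Nat.card {e // P e} + (Finset.univ.filter fun e => ¬ P e).card = n := by
  rw [Nat.card_eq_fintype_card, Fintype.card_subtype, Finset.card_filter_add_card_filter_not]
  simp [ZMod.card]

theorem at_most_one_of_connected (hn : 3 ≤ n) (P : ZMod n → Prop) (h : (cg P).Connected) :
    ∃ k, ∀ u, u ≠ k → P u := by
  have h1 := h.card_vert_le_card_edgeSet_add_one
  rw [card_edge_cg hn, Nat.card_zmod] at h1
  have h2 := card_compl_add P
  have h3 : (Finset.univ.filter fun e => ¬ P e).card ≤ 1 := by omega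
  rw [Finset.card_le_one_iff_subset_singleton] at h3
  obtain ⟨k, hk⟩ := h3
  refine ⟨k, fun u hu => ?_⟩
  by_contra hc
  exact hu (Finset.mem_singleton.1 (hk (by simp [hc])))

theorem isTree_iff (hn : 3 ≤ n) (P : ZMod n → Prop) :
    (cg P).IsTree ↔ ∃ k, ∀ u, P u ↔ u ≠ k := by
  rw [SimpleGraph.isTree_iff_connected_and_card, card_edge_cg hn, Nat.card_zmod]
  have h2 := card_compl_add P
  constructor
  · rintro ⟨h, h1⟩
    have h3 : (Finset.univ.filter fun e => ¬ P e).card = 1 := by omega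
    rw [Finset.card_eq_one] at h3
    obtain ⟨k, hk⟩ := h3
    refine ⟨k, fun u => ?_⟩
    have : u ∈ (Finset.univ.filter fun e => ¬ P e) ↔ u ∈ ({k} : Finset (ZMod n)) := by rw [hk]
    rw [Finset.mem_filter, Finset.mem_singleton] at this
    have := Finset.mem_univ u
    tauto
  · rintro ⟨k, hk⟩
    refine ⟨cg_connected hn P k fun u hu => (hk u).2 hu, ?_⟩
    have h3 : (Finset.univ.filter fun e => ¬ P e) = {k} := by
      ext u; simp [hk]
    rw [h3, Finset.card_singleton] at h2
    exact h2

/-- The directed edge set with sign function `δ`. -/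
def dirSet (δ : ZMod n → ℤ) : Set (ZMod n × ZMod n) :=
  {p | (p.2 = p.1 + 1 ∧ δ p.1 = 1) ∨ (p.1 = p.2 + 1 ∧ δ p.2 = -1)}

/-- Values in `{-1, 0, 1}`. -/
def IsSgn (δ : ZMod n → ℤ) : Prop := ∀ e, δ e = -1 ∨ δ e = 0 ∨ δ e = 1

theorem mem_dirSet (δ : ZMod n → ℤ) (u v : ZMod n) :
    (u, v) ∈ dirSet δ ↔ (v = u + 1 ∧ δ u = 1) ∨ (u = v + 1 ∧ δ v = -1) := Iff.rfl

theorem fwd_mem (hn : 3 ≤ n) (δ : ZMod n → ℤ) (e : ZMod n) :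
    (e, e + 1) ∈ dirSet δ ↔ δ e = 1 := by
  rw [mem_dirSet]
  have := ne_succ_succ hn e
  tauto

theorem bwd_mem (hn : 3 ≤ n) (δ : ZMod n → ℤ) (e : ZMod n) :
    (e + 1, e) ∈ dirSet δ ↔ δ e = -1 := by
  rw [mem_dirSet]
  have := ne_succ_succ hn e
  tauto

theorem dirSet_inj (hn : 3 ≤ n) {δ δ' : ZMod n → ℤ} (h : IsSgn δ) (h' : IsSgn δ')
    (he : dirSet δ = dirSet δ') : δ = δ' := by
  funext e
  have h1 := fwd_mem hn δ e
  have h2 := bwd_mem hn δ e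
  rw [he, fwd_mem hn] at h1
  rw [he, bwd_mem hn] at h2
  have h3 := h e
  have h4 := h' e
  omega

theorem fromDir_dirSet (hn : 3 ≤ n) {δ : ZMod n → ℤ} (h : IsSgn δ) :
    fromDir (dirSet δ) = cg (fun e => δ e ≠ 0) := by
  ext u v
  rw [cg_adj hn]
  unfold fromDir
  rw [SimpleGraph.fromRel_adj, mem_dirSet, mem_dirSet]
  constructor
  · rintro ⟨_, (⟨h1, h2⟩ | ⟨h1, h2⟩) | (⟨h1, h2⟩ | ⟨h1, h2⟩)⟩ <;> simp [h1, h2]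
  · intro h1
    refine ⟨?_, ?_⟩
    · rintro rfl
      rcases h1 with h1 | h1 <;> exact ne_succ hn _ h1.1
    · rcases h1 with ⟨h1, h2⟩ | ⟨h1, h2⟩
      · rcases h u with h | h | h <;> tauto
      · rcases h v with h | h | h <;> tauto

theorem cyc_adj (hn : 3 ≤ n) (u v : ZMod n) :
    (SimpleGraph.fromRel (fun u v : ZMod n => v = u + 1)).Adj u v ↔ v = u + 1 ∨ u = v + 1 := by
  rw [SimpleGraph.fromRel_adj]
  constructor
  · exact fun h => h.2
  · intro h
    refine ⟨?_, h⟩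
    rintro rfl
    rcases h with h | h <;> exact ne_succ hn _ h

theorem layer_graph (hn : 3 ≤ n) (l : ZMod n → ℤ) :
    (SimpleGraph.fromRel fun u v =>
      (SimpleGraph.fromRel (fun u v : ZMod n => v = u + 1)).Adj u v ∧ |l u - l v| = 1)
      = cg (fun e => |l e - l (e + 1)| = 1) := by
  ext u v
  rw [cg_adj hn, SimpleGraph.fromRel_adj, cyc_adj hn, cyc_adj hn, abs_sub_comm (l v) (l u)]
  constructor
  · rintro ⟨_, (⟨h1 | h1, h2⟩ | ⟨h1 | h1, h2⟩)⟩
    · left; refine ⟨h1, ?_⟩; rw [← h1]; exact h2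
    · right; refine ⟨h1, ?_⟩; rw [← h1, abs_sub_comm]; exact h2
    · right; refine ⟨h1, ?_⟩; rw [← h1, abs_sub_comm]; exact h2
    · left; refine ⟨h1, ?_⟩; rw [← h1]; exact h2
  · intro h
    rcases h with ⟨rfl, h⟩ | ⟨rfl, h⟩
    · exact ⟨ne_succ hn _, Or.inl ⟨Or.inl rfl, h⟩⟩
    · exact ⟨(ne_succ hn _).symm, Or.inl ⟨Or.inr rfl, by rw [abs_sub_comm]; exact h⟩⟩

theorem facetDigraph_eq (hn : 3 ≤ n) (l : ZMod n → ℤ) :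
    facetDigraph (SimpleGraph.fromRel (fun u v : ZMod n => v = u + 1)) l
      = dirSet (fun e => l (e + 1) - l e) := by
  ext ⟨u, v⟩
  rw [mem_dirSet]
  unfold facetDigraph
  rw [Set.mem_ofPred_eq]
  dsimp only
  rw [cyc_adj hn]
  constructor
  · rintro ⟨rfl | rfl, h⟩
    · left; exact ⟨rfl, h⟩
    · right; exact ⟨rfl, by linarith⟩
  · rintro (⟨rfl, h⟩ | ⟨rfl, h⟩)
    · exact ⟨Or.inl rfl, h⟩
    · exact ⟨Or.inr rfl, by linarith⟩

theorem facet_iff (hn : 3 ≤ n) (D : Set (ZMod n × ZMod n)) :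
    IsFacetGraph (SimpleGraph.fromRel (fun u v : ZMod n => v = u + 1)) D ↔
      ∃ δ : ZMod n → ℤ, IsSgn δ ∧ ∑ e, δ e = 0 ∧ (∃ k, ∀ e, e ≠ k → δ e ≠ 0) ∧
        D = dirSet δ := by
  constructor
  · rintro ⟨l, hl, rfl⟩
    refine ⟨fun e => l (e + 1) - l e, ?_, ?_, ?_, facetDigraph_eq hn l⟩
    · intro e
      have h := hl.step ((cyc_adj hn e (e + 1)).2 (Or.inl rfl))
      rw [abs_le] at h
      dsimp only
      omega
    · have h := Equiv.sum_comp (Equiv.addRight (1 : ZMod n)) l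
      simp only [Equiv.coe_addRight] at h
      rw [Finset.sum_sub_distrib, h, sub_self]
    · have h := hl.conn
      rw [layer_graph hn] at h
      obtain ⟨k, hk⟩ := at_most_one_of_connected hn _ h
      refine ⟨k, fun e he h0 => ?_⟩
      have := hk e he
      dsimp only at h0
      rw [abs_sub_comm, h0] at this
      simp at this
  · rintro ⟨δ, hs, h0, ⟨k, hk⟩, rfl⟩
    let l : ZMod n → ℤ := fun v => ∑ j ∈ Finset.range v.val, δ (j : ZMod n)
    have hsum : ∑ j ∈ Finset.range n, δ (j : ZMod n) = 0 := by
      rw [← h0]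
      refine Finset.sum_bij (fun j _ => (j : ZMod n)) (fun _ _ => Finset.mem_univ _) ?_ ?_ ?_
      · intro a ha b hb hab
        have := congrArg ZMod.val hab
        rwa [ZMod.val_cast_of_lt (Finset.mem_range.1 ha),
          ZMod.val_cast_of_lt (Finset.mem_range.1 hb)] at this
      · intro b _
        exact ⟨b.val, Finset.mem_range.2 (ZMod.val_lt b), ZMod.natCast_zmod_val b⟩
      · intros; rfl
    have hl : ∀ e, l (e + 1) - l e = δ e := by
      intro e
      have hsucc : ∑ j ∈ Finset.range (e.val + 1), δ (j : ZMod n) = l e + δ e := by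
        rw [Finset.sum_range_succ, ZMod.natCast_zmod_val]
      by_cases h : e.val = n - 1
      · rw [h, Nat.sub_add_cancel (by omega), hsum] at hsucc
        have : l (e + 1) = 0 := by
          simp only [l]; rw [val_succ_eq hn, if_pos h]; simp
        rw [this]; linarith
      · have : l (e + 1) = l e + δ e := by
          rw [← hsucc]; simp only [l]; rw [val_succ_eq hn, if_neg h]
        rw [this]; ring
    have hl' : ∀ e, |l e - l (e + 1)| = |δ e| := by
      intro e; rw [abs_sub_comm, hl]
    refine ⟨l, ⟨?_, ?_⟩, ?_⟩
    · intro u v h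
      rw [cyc_adj hn] at h
      rcases h with rfl | rfl
      · rw [hl']; rcases hs u with h | h | h <;> simp [h]
      · rw [abs_sub_comm, hl']; rcases hs v with h | h | h <;> simp [h]
    · rw [layer_graph hn]
      refine cg_connected hn _ k fun u hu => ?_
      rw [hl']
      have := hk u hu
      rcases hs u with h | h | h <;> simp [h] at this ⊢
    · rw [facetDigraph_eq hn]
      congr 1
      funext e
      exact (hl e).symm

theorem isSgn_update {δ : ZMod n → ℤ} (h : IsSgn δ) (k : ZMod n) :
    IsSgn (Function.update δ k 0) := by
  intro e
  rw [Function.update_apply]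
  split_ifs
  · simp
  · exact h e

theorem spanning_iff (hn : 3 ≤ n) {δ : ZMod n → ℤ} (hs : IsSgn δ) (T : Set (ZMod n × ZMod n)) :
    IsSpanningTreeOf T (dirSet δ) ↔
      ∃ k, (∀ e, e ≠ k → δ e ≠ 0) ∧ T = dirSet (Function.update δ k 0) := by
  constructor
  · rintro ⟨hT, ht⟩
    let δ' : ZMod n → ℤ := fun e =>
      if δ e = 1 ∧ (e, e + 1) ∈ T then 1 else if δ e = -1 ∧ (e + 1, e) ∈ T then -1 else 0
    have hs' : IsSgn δ' := by
      intro e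
      simp only [δ']
      split_ifs <;> simp
    have e1 : ∀ e, δ' e = 1 ↔ (δ e = 1 ∧ (e, e + 1) ∈ T) := by
      intro e
      simp only [δ']
      split_ifs with h1 h2 <;> simp [h1]
    have e2 : ∀ e, δ' e = -1 ↔ (δ e = -1 ∧ (e + 1, e) ∈ T) := by
      intro e
      simp only [δ']
      split_ifs with h1 h2
      · simp [h1.1]
      · simp [h2]
      · simp [h2]
    have hTe : T = dirSet δ' := by
      ext ⟨u, v⟩
      rw [mem_dirSet, e1, e2]
      constructor
      · intro h
        have := hT h
        rw [mem_dirSet] at this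
        rcases this with ⟨rfl, h2⟩ | ⟨rfl, h2⟩
        · exact Or.inl ⟨rfl, h2, h⟩
        · exact Or.inr ⟨rfl, h2, h⟩
      · rintro (⟨rfl, _, h⟩ | ⟨rfl, _, h⟩) <;> exact h
    rw [hTe, fromDir_dirSet hn hs', isTree_iff hn] at ht
    obtain ⟨k, hk⟩ := ht
    have hδ : ∀ e, e ≠ k → δ e = δ' e := by
      intro e he
      have := (hk e).2 he
      rcases hs' e with h | h | h
      · rw [h]; exact ((e2 e).1 h).1
      · exact absurd h this
      · rw [h]; exact ((e1 e).1 h).1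
    refine ⟨k, fun e he => ?_, ?_⟩
    · rw [hδ e he]; exact (hk e).2 he
    · rw [hTe]
      congr 1
      funext e
      rw [Function.update_apply]
      split_ifs with h
      · have := hk e
        tauto
      · exact (hδ e h).symm
  · rintro ⟨k, hk, rfl⟩
    refine ⟨?_, ?_⟩
    · rintro ⟨u, v⟩ h
      rw [mem_dirSet] at h ⊢
      simp only [Function.update_apply] at h
      rcases h with ⟨h1, h2⟩ | ⟨h1, h2⟩ <;> split_ifs at h2 <;> simp_all
    · rw [fromDir_dirSet hn (isSgn_update hs k), isTree_iff hn]
      refine ⟨k, fun u => ?_⟩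
      rw [Function.update_apply]
      split_ifs with h
      · simp [h]
      · simp [h, hk u h]

theorem mem_und (hn : 3 ≤ n) {δ : ZMod n → ℤ} (hs : IsSgn δ) (e : ZMod n) :
    s(e, e + 1) ∈ und (dirSet δ) ↔ δ e ≠ 0 := by
  unfold und
  rw [Set.mem_ofPred_eq]
  constructor
  · rintro ⟨⟨u, v⟩, h, he⟩
    rw [mem_dirSet] at h
    dsimp only at he
    rcases h with ⟨rfl, h⟩ | ⟨rfl, h⟩
    · rw [edge_inj hn he, h]; simp
    · rw [Sym2.eq_swap (a := v + 1)] at he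
      rw [edge_inj hn he, h]; simp
  · intro h
    rcases hs e with h1 | h1 | h1
    · exact ⟨(e + 1, e), (bwd_mem hn δ e).2 h1, Sym2.eq_swap⟩
    · exact absurd h1 h
    · exact ⟨(e, e + 1), (fwd_mem hn δ e).2 h1, rfl⟩

theorem tour_visits (hn : 3 ≤ n) (U : Set (Sym2 (ZMod n))) (k : ZMod n)
    (hU : ∀ e, s(e, e + 1) ∈ U ↔ e ≠ k)
    (ρ : ZMod n → ZMod n → ZMod n)
    (hρ : ρ = fun x y : ZMod n => if y = x + 1 then x - 1 else x + 1) :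
    firstVisit ρ U 0 1 k (k + 1) < firstVisit ρ U 0 1 (k + 1) k := by
  have hkn := ZMod.val_lt k
  have sf : ∀ e, e ≠ k → tourStep ρ U (e, e + 1) = (e + 1, e + 1 + 1) := by
    intro e he
    unfold tourStep
    rw [if_pos ((hU e).2 he), hρ]
    dsimp only
    rw [if_neg (ne_succ_succ hn e)]
  have sk : tourStep ρ U (k, k + 1) = (k, k - 1) := by
    unfold tourStep
    rw [if_neg (fun h => (hU k).1 h rfl), hρ]
    dsimp only
    rw [if_pos rfl]
  have sb : ∀ e, e ≠ k → tourStep ρ U (e + 1, e) = (e, e - 1) := by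
    intro e he
    unfold tourStep
    rw [if_pos (by dsimp only; rw [Sym2.eq_swap]; exact (hU e).2 he), hρ]
    dsimp only
    rw [if_pos rfl]
  have t1 : ∀ m : ℕ, m ≤ k.val → tourSeq ρ U 0 1 m = ((m : ZMod n), (m : ZMod n) + 1) := by
    intro m
    induction m with
    | zero => intro _; simp [tourSeq]
    | succ m ih =>
      intro hm
      have h := ih (by omega)
      unfold tourSeq at h ⊢
      rw [Function.iterate_succ_apply', h, sf]
      · push_cast; rfl
      · intro h
        have h2 := congrArg ZMod.val h
        rw [ZMod.val_cast_of_lt (by omega)] at h2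
        omega
  have t2 : ∀ j : ℕ, j ≤ n - 1 →
      tourSeq ρ U 0 1 (k.val + 1 + j) = (k - (j : ZMod n), k - (j : ZMod n) - 1) := by
    intro j
    induction j with
    | zero =>
      intro _
      have h := t1 k.val le_rfl
      unfold tourSeq at h ⊢
      rw [add_zero, Function.iterate_succ_apply', h, ZMod.natCast_zmod_val, sk]
      simp
    | succ j ih =>
      intro hj
      have h := ih (by omega)
      unfold tourSeq at h ⊢
      rw [← add_assoc, Function.iterate_succ_apply', h]
      have h2 := sb (k - (j : ZMod n) - 1) (by
        intro h
        have h3 : ((j + 1 : ℕ) : ZMod n) = 0 := by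
          push_cast
          linear_combination -h
        have h4 := congrArg ZMod.val h3
        rw [ZMod.val_cast_of_lt (by omega), ZMod.val_zero] at h4
        omega)
      rw [sub_add_cancel] at h2
      rw [h2]
      push_cast
      rw [sub_sub]
  have v1 : firstVisit ρ U 0 1 k (k + 1) ≤ k.val := by
    apply Nat.sInf_le
    have := t1 k.val le_rfl
    rw [ZMod.natCast_zmod_val] at this
    exact this
  refine lt_of_le_of_lt v1 ?_
  have hne : {m | tourSeq ρ U 0 1 m = (k + 1, k)}.Nonempty := by
    refine ⟨k.val + 1 + (n - 1), ?_⟩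
    rw [Set.mem_ofPred_eq, t2 _ le_rfl]
    have : ((n - 1 : ℕ) : ZMod n) = -1 := by
      rw [Nat.cast_sub (by omega)]; simp
    rw [this]; simp
  have hm := Nat.sInf_mem hne
  rw [Set.mem_ofPred_eq] at hm
  change k.val < sInf {m | tourSeq ρ U 0 1 m = (k + 1, k)}
  by_contra hc
  rw [t1 _ (by omega)] at hm
  have h1 := congrArg Prod.fst hm
  have h2 := congrArg Prod.snd hm
  dsimp only at h1 h2
  rw [h1] at h2
  exact ne_succ_succ hn k h2.symm

theorem jaeger_iff (hn : 3 ≤ n) {δ : ZMod n → ℤ} (hs : IsSgn δ) (k : ZMod n)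
    (hk : ∀ e, e ≠ k → δ e ≠ 0)
    (ρ : ZMod n → ZMod n → ZMod n)
    (hρ : ρ = fun x y : ZMod n => if y = x + 1 then x - 1 else x + 1) :
    IsJaegerTree ρ 0 1 (dirSet δ) (dirSet (Function.update δ k 0)) ↔ δ k ≠ -1 := by
  have hU : ∀ e, s(e, e + 1) ∈ und (dirSet (Function.update δ k 0)) ↔ e ≠ k := by
    intro e
    rw [mem_und hn (isSgn_update hs k), Function.update_apply]
    split_ifs with h
    · simp [h]
    · simp [h, hk e h]
  have hv := tour_visits hn _ k hU ρ hρ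
  constructor
  · rintro ⟨_, h⟩ h1
    have h2 := h (k + 1, k) ((bwd_mem hn δ k).2 h1)
      (by dsimp only; rw [Sym2.eq_swap, hU]; simp)
    dsimp only at h2
    omega
  · intro h1
    refine ⟨(spanning_iff hn hs _).2 ⟨k, hk, rfl⟩, ?_⟩
    rintro ⟨u, v⟩ h h2
    rw [mem_dirSet] at h
    dsimp only at h2 ⊢
    rcases h with ⟨rfl, h⟩ | ⟨rfl, h⟩
    · rw [hU, not_not] at h2
      subst h2
      exact hv
    · rw [Sym2.eq_swap, hU, not_not] at h2
      subst h2
      exact absurd h h1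

theorem diff_dirSet (hn : 3 ≤ n) (δ : ZMod n → ℤ) (p : ZMod n × ZMod n) (e : ZMod n)
    (hp : (p = (e, e + 1) ∧ δ e = 1) ∨ (p = (e + 1, e) ∧ δ e = -1)) :
    dirSet δ \ {p} = dirSet (Function.update δ e 0) := by
  ext ⟨u, v⟩
  rw [Set.mem_sdiff, Set.mem_singleton_iff, mem_dirSet, mem_dirSet, Function.update_apply,
    Function.update_apply]
  have hne := ne_succ_succ hn e
  constructor
  · rintro ⟨⟨rfl, h⟩ | ⟨rfl, h⟩, h2⟩
    · left
      refine ⟨rfl, ?_⟩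
      rw [if_neg]
      · exact h
      · rintro rfl
        rcases hp with hp | hp
        · exact h2 hp.1.symm
        · rw [h] at hp; norm_num at hp
    · right
      refine ⟨rfl, ?_⟩
      rw [if_neg]
      · exact h
      · rintro rfl
        rcases hp with hp | hp
        · rw [h] at hp; norm_num at hp
        · exact h2 hp.1.symm
  · rintro (⟨rfl, h⟩ | ⟨rfl, h⟩)
    · split_ifs at h with h1
      · exact absurd h (by norm_num)
      refine ⟨Or.inl ⟨rfl, h⟩, ?_⟩
      rintro rfl
      rcases hp with ⟨hp, _⟩ | ⟨hp, _⟩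
      · exact h1 (congrArg Prod.fst hp)
      · have h3 := congrArg Prod.fst hp
        have h4 := congrArg Prod.snd hp
        dsimp only at h3 h4
        rw [h3] at h4
        exact hne h4.symm
    · split_ifs at h with h1
      refine ⟨Or.inr ⟨rfl, h⟩, ?_⟩
      rintro rfl
      rcases hp with ⟨hp, _⟩ | ⟨hp, _⟩
      · have h3 := congrArg Prod.fst hp
        have h4 := congrArg Prod.snd hp
        dsimp only at h3 h4
        rw [h4] at h3
        exact hne h3.symm
      · exact h1 (congrArg Prod.snd hp)

/-- The set of tail-edges, as edge indices. -/
noncomputable def tailSet (δ : ZMod n → ℤ) (k : ZMod n) : Finset (ZMod n) :=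
  Finset.univ.filter fun e => (e.val < k.val ∧ δ e = 1) ∨ (k.val < e.val ∧ δ e = -1)

theorem reach_del (hn : 3 ≤ n) {δ : ZMod n → ℤ} (hs : IsSgn δ) (k : ZMod n)
    (hk : ∀ e, e ≠ k → δ e ≠ 0) (p : ZMod n × ZMod n) (e : ZMod n) (hek : e ≠ k)
    (hp : (p = (e, e + 1) ∧ δ e = 1) ∨ (p = (e + 1, e) ∧ δ e = -1)) (v : ZMod n) :
    (fromDir (dirSet (Function.update δ k 0) \ {p})).Reachable 0 v ↔
      (e.val < k.val ∧ (v.val ≤ e.val ∨ k.val < v.val)) ∨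
      (k.val < e.val ∧ (v.val ≤ k.val ∨ e.val < v.val)) := by
  rw [diff_dirSet hn _ p e (by rwa [Function.update_of_ne hek]),
    fromDir_dirSet hn (isSgn_update (isSgn_update hs k) e)]
  have hP : ∀ u, Function.update (Function.update δ k 0) e 0 u ≠ 0 ↔ u ≠ e ∧ u ≠ k := by
    intro u
    rw [Function.update_apply, Function.update_apply]
    split_ifs with h1 h2
    · simp [h1]
    · simp [h2]
    · simp [h1, h2, hk u h2]
  have hv : e.val ≠ k.val := fun h => hek (ZMod.val_injective n h)
  rcases lt_or_gt_of_ne hv with h | h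
  · rw [reach_iff hn _ e k h hP]
    omega
  · rw [reach_iff hn _ k e h (fun u => by rw [hP u]; exact and_comm)]
    omega

theorem numTail_eq (hn : 3 ≤ n) {δ : ZMod n → ℤ} (hs : IsSgn δ) (k : ZMod n)
    (hk : ∀ e, e ≠ k → δ e ≠ 0) :
    numTailEdges 0 (dirSet (Function.update δ k 0)) = (tailSet δ k).card := by
  have hset : tailEdges 0 (dirSet (Function.update δ k 0)) =
      (fun e : ZMod n => if e.val < k.val then (e, e + 1) else (e + 1, e)) ''
        (tailSet δ k : Set (ZMod n)) := by
    ext ⟨u, v⟩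
    have hkn := ZMod.val_lt k
    unfold tailEdges IsTailEdge
    rw [Set.mem_ofPred_eq, Set.mem_image]
    constructor
    · rintro ⟨hm, hr⟩
      rw [mem_dirSet, Function.update_apply, Function.update_apply] at hm
      rcases hm with ⟨rfl, h⟩ | ⟨rfl, h⟩
      · split_ifs at h with h1
        · exact absurd h (by norm_num)
        rw [reach_del hn hs k hk _ u h1 (Or.inl ⟨rfl, h⟩)] at hr
        dsimp only at hr
        have hlt : u.val < k.val := by omega
        exact ⟨u, by simp [tailSet, hlt, h], by rw [if_pos hlt]⟩
      · split_ifs at h with h1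
        rw [reach_del hn hs k hk _ v h1 (Or.inr ⟨rfl, h⟩)] at hr
        dsimp only at hr
        rw [val_succ_eq hn] at hr
        have hlt : k.val < v.val := by split_ifs at hr <;> omega
        exact ⟨v, by simp [tailSet, hlt, h], by rw [if_neg (by omega)]⟩
    · rintro ⟨e, he, hp⟩
      simp only [tailSet, Finset.coe_filter, Finset.mem_univ, true_and, Set.mem_ofPred_eq] at he
      rcases he with ⟨hlt, h⟩ | ⟨hlt, h⟩
      · rw [if_pos hlt] at hp
        have hek : e ≠ k := by rintro rfl; omega
        rw [← hp, fwd_mem hn, Function.update_of_ne hek,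
          reach_del hn hs k hk _ e hek (Or.inl ⟨rfl, h⟩)]
        dsimp only
        exact ⟨h, by omega⟩
      · rw [if_neg (by omega)] at hp
        have hek : e ≠ k := by rintro rfl; omega
        rw [← hp, bwd_mem hn, Function.update_of_ne hek,
          reach_del hn hs k hk _ e hek (Or.inr ⟨rfl, h⟩)]
        dsimp only
        refine ⟨h, ?_⟩
        rw [val_succ_eq hn]
        split_ifs <;> omega
  unfold numTailEdges
  rw [hset, Nat.card_image_of_injective]
  · simp
  · intro e f h
    dsimp only at h
    have hne := ne_succ_succ hn e
    split_ifs at h <;> simp only [Prod.mk.injEq] at h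
    · exact h.1
    · exact absurd (h.1.trans (by rw [← h.2])) hne
    · exact absurd (h.2.trans (by rw [← h.1])) hne
    · exact h.2

/-- The convolution `∑_{a+b=i} C(p+2a, a) C(q+2b, b)`. -/
def convSum (p q i : ℕ) : ℕ :=
  ∑ x ∈ Finset.HasAntidiagonal.antidiagonal i, Nat.choose (p + 2 * x.1) x.1 * Nat.choose (q + 2 * x.2) x.2

theorem conv_left (p q i : ℕ) : convSum (p + 1) q (i + 1) = convSum p q (i + 1) + convSum (p + 2) q i := by
  unfold convSum
  rw [Finset.Nat.sum_antidiagonal_succ, Finset.Nat.sum_antidiagonal_succ,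
    add_assoc (_ * _), ← Finset.sum_add_distrib]
  congr 1
  · simp
  · refine Finset.sum_congr rfl fun x _ => ?_
    rw [← add_mul]
    congr 1
    dsimp only
    rw [show p + 1 + 2 * (x.1 + 1) = (p + 2 + 2 * x.1) + 1 by ring,
      show p + 2 * (x.1 + 1) = p + 2 + 2 * x.1 by ring, Nat.choose_succ_succ', add_comm]

theorem conv_symm (p q i : ℕ) : convSum p q i = convSum q p i := by
  unfold convSum
  rw [← Finset.Nat.sum_antidiagonal_swap]
  exact Finset.sum_congr rfl fun x _ => mul_comm _ _

theorem conv_shift : ∀ i p q : ℕ, convSum (p + 1) q i = convSum p (q + 1) i := by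
  intro i
  induction i with
  | zero => intro p q; simp [convSum]
  | succ i ih =>
    intro p q
    rw [conv_left, conv_symm p (q + 1), conv_left, conv_symm q p, conv_symm (q + 2) p, ih, ih]

theorem conv_zero (q i : ℕ) : ∀ p, convSum p q i = convSum 0 (p + q) i := by
  intro p
  induction p generalizing q with
  | zero => rw [zero_add]
  | succ p ih => rw [conv_shift, ih, show p + (q + 1) = p + 1 + q by ring]

theorem main_identity (n i h : ℕ) (hi : i ≤ h) (hh : h + i ≤ n - 1) :
    ∑ a ∈ Finset.range (i + 1),
      Nat.choose (h + 2 * a - i) a * Nat.choose (n - 1 - (h + 2 * a - i)) (i - a) =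
    ∑ j ∈ Finset.range (i + 1), Nat.choose (2 * j) j * Nat.choose (n - 1 - 2 * j) (i - j) := by
  have h1 : ∑ a ∈ Finset.range (i + 1),
      Nat.choose (h + 2 * a - i) a * Nat.choose (n - 1 - (h + 2 * a - i)) (i - a) =
      convSum (h - i) (n - 1 - h - i) i := by
    unfold convSum
    rw [Finset.Nat.sum_antidiagonal_eq_sum_range_succ_mk]
    refine Finset.sum_congr rfl fun a ha => ?_
    have := Finset.mem_range.1 ha
    dsimp only
    congr 2 <;> omega
  have h2 : ∑ j ∈ Finset.range (i + 1),
      Nat.choose (2 * j) j * Nat.choose (n - 1 - 2 * j) (i - j) =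
      convSum 0 (h - i + (n - 1 - h - i)) i := by
    unfold convSum
    rw [Finset.Nat.sum_antidiagonal_eq_sum_range_succ_mk]
    refine Finset.sum_congr rfl fun a ha => ?_
    have := Finset.mem_range.1 ha
    dsimp only
    congr 2 <;> omega
  rw [h1, h2, conv_zero]

/-- Tail-edges before the removed edge. -/
noncomputable def tailA (δ : ZMod n → ℤ) (k : ZMod n) : Finset (ZMod n) :=
  Finset.univ.filter fun e => e.val < k.val ∧ δ e = 1

/-- Tail-edges after the removed edge. -/
noncomputable def tailB (δ : ZMod n → ℤ) (k : ZMod n) : Finset (ZMod n) :=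
  Finset.univ.filter fun e => k.val < e.val ∧ δ e = -1

/-- Indices before `k`. -/
def lowS (k : ZMod n) : Finset (ZMod n) := Finset.univ.filter fun e => e.val < k.val

/-- Indices after `k`. -/
def highS (k : ZMod n) : Finset (ZMod n) := Finset.univ.filter fun e => k.val < e.val

theorem card_lowS (k : ZMod n) : (lowS k).card = k.val := by
  have hk := ZMod.val_lt k
  rw [← Finset.card_range k.val]
  refine Finset.card_bij (fun e _ => e.val) ?_ ?_ ?_
  · intro e he
    simpa [lowS] using he
  · intro e _ f _ h
    exact ZMod.val_injective n h
  · intro b hb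
    have hb := Finset.mem_range.1 hb
    have h1 : ((b : ℕ) : ZMod n).val = b := ZMod.val_cast_of_lt (by omega)
    exact ⟨(b : ZMod n), by simp only [lowS, Finset.mem_filter, Finset.mem_univ, true_and]; omega, h1⟩

theorem card_highS (k : ZMod n) : (highS k).card = n - 1 - k.val := by
  have hk := ZMod.val_lt k
  rw [show n - 1 - k.val = (Finset.Ioo k.val n).card by rw [Nat.card_Ioo]; omega]
  refine Finset.card_bij (fun e _ => e.val) ?_ ?_ ?_
  · intro e he
    have := ZMod.val_lt e
    simp only [highS, Finset.mem_filter, Finset.mem_univ, true_and] at he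
    exact Finset.mem_Ioo.2 ⟨he, this⟩
  · intro e _ f _ h
    exact ZMod.val_injective n h
  · intro b hb
    have hb := Finset.mem_Ioo.1 hb
    have h1 : ((b : ℕ) : ZMod n).val = b := ZMod.val_cast_of_lt (by omega)
    exact ⟨(b : ZMod n), by simp only [highS, Finset.mem_filter, Finset.mem_univ, true_and]; omega, h1⟩

theorem card_tailSet (δ : ZMod n → ℤ) (k : ZMod n) :
    (tailSet δ k).card = (tailA δ k).card + (tailB δ k).card := by
  unfold tailSet tailA tailB
  rw [Finset.filter_or, Finset.card_union_of_disjoint]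
  rw [Finset.disjoint_filter]
  intro e _ h1 h2
  omega

theorem sum_formula {δ : ZMod n → ℤ} (hs : IsSgn δ) (k : ZMod n)
    (hk : ∀ e, e ≠ k → δ e ≠ 0) :
    ∑ e, δ e = δ k + 2 * (tailA δ k).card - k.val + (n - 1 - k.val) - 2 * (tailB δ k).card := by
  have hpt : ∀ e, δ e = (if e = k then δ k else 0)
      + 2 * (if e.val < k.val ∧ δ e = 1 then 1 else 0)
      - (if e.val < k.val then 1 else 0)
      + (if k.val < e.val then 1 else 0)
      - 2 * (if k.val < e.val ∧ δ e = -1 then 1 else 0) := by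
    intro e
    by_cases he : e = k
    · subst he; simp
    · have h1 := hk e he
      have h2 := hs e
      have h3 : e.val ≠ k.val := fun h => he (ZMod.val_injective n h)
      rw [if_neg he]
      split_ifs <;> omega
  rw [Finset.sum_congr rfl fun e _ => hpt e]
  have hkn := ZMod.val_lt k
  have c1 := card_lowS k
  have c2 := card_highS k
  unfold lowS at c1
  unfold highS at c2
  rw [Finset.sum_sub_distrib, Finset.sum_add_distrib, Finset.sum_sub_distrib,
    Finset.sum_add_distrib, ← Finset.mul_sum, ← Finset.mul_sum, Finset.sum_boole,
    Finset.sum_boole, Finset.sum_boole, Finset.sum_boole, Finset.sum_ite_eq', c1, c2]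
  unfold tailA tailB
  simp only [Finset.mem_univ, if_true]
  omega

/-- The sign function built from the removed edge and the tail-edges. -/
noncomputable def mkD (k : ZMod n) (A B : Finset (ZMod n)) : ZMod n → ℤ := fun e =>
  if e = k then 1 - ((n % 2 : ℕ) : ℤ) else if e.val < k.val then (if e ∈ A then 1 else -1)
    else (if e ∈ B then -1 else 1)

theorem mkD_sgn (k : ZMod n) (A B : Finset (ZMod n)) : IsSgn (mkD k A B) := by
  intro e
  unfold mkD
  split_ifs <;> omega

theorem mkD_ne (k : ZMod n) (A B : Finset (ZMod n)) : ∀ e, e ≠ k → mkD k A B e ≠ 0 := by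
  intro e he
  unfold mkD
  rw [if_neg he]
  split_ifs <;> simp

theorem mkD_self (k : ZMod n) (A B : Finset (ZMod n)) : mkD k A B k = 1 - ((n % 2 : ℕ) : ℤ) := by
  unfold mkD
  rw [if_pos rfl]

theorem tailA_mkD (k : ZMod n) (A B : Finset (ZMod n)) (hA : A ⊆ lowS k) :
    tailA (mkD k A B) k = A := by
  ext e
  unfold tailA mkD
  simp only [Finset.mem_filter, Finset.mem_univ, true_and]
  constructor
  · rintro ⟨h1, h2⟩
    rw [if_neg (by rintro rfl; omega), if_pos h1] at h2
    by_contra hc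
    rw [if_neg hc] at h2
    omega
  · intro h
    have h1 := hA h
    simp only [lowS, Finset.mem_filter, Finset.mem_univ, true_and] at h1
    refine ⟨h1, ?_⟩
    rw [if_neg (by rintro rfl; omega), if_pos h1, if_pos h]

theorem tailB_mkD (k : ZMod n) (A B : Finset (ZMod n)) (hB : B ⊆ highS k) :
    tailB (mkD k A B) k = B := by
  ext e
  unfold tailB mkD
  simp only [Finset.mem_filter, Finset.mem_univ, true_and]
  constructor
  · rintro ⟨h1, h2⟩
    rw [if_neg (by rintro rfl; omega), if_neg (by omega)] at h2
    by_contra hc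
    rw [if_neg hc] at h2
    omega
  · intro h
    have h1 := hB h
    simp only [highS, Finset.mem_filter, Finset.mem_univ, true_and] at h1
    refine ⟨h1, ?_⟩
    rw [if_neg (by rintro rfl; omega), if_neg (by omega), if_pos h]

/-- Encodings of Jaeger trees with `i` tail-edges. -/
def goodSet (n : ℕ) [NeZero n] (i : ℕ) : Set (ZMod n × (ZMod n → ℤ)) :=
  {x | IsSgn x.2 ∧ ∑ e, x.2 e = 0 ∧ (∀ e, e ≠ x.1 → x.2 e ≠ 0) ∧ x.2 x.1 ≠ -1 ∧
    (tailSet x.2 x.1).card = i}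

/-- The removed edge, determined by the number of early tail-edges. -/
def kOf (n i a : ℕ) : ZMod n := ((n / 2 + 2 * a - i : ℕ) : ZMod n)

/-- The finite set parametrizing `goodSet`. -/
def dom (n : ℕ) [NeZero n] (i : ℕ) : Finset (Σ _ : ℕ, Finset (ZMod n) × Finset (ZMod n)) :=
  (Finset.range (i + 1)).sigma fun a =>
    Finset.powersetCard a (lowS (kOf n i a)) ×ˢ Finset.powersetCard (i - a) (highS (kOf n i a))

theorem val_kOf (hn : 3 ≤ n) (i a : ℕ) (hi : i ≤ (n - 1) / 2) (ha : a ≤ i) :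
    (kOf n i a).val = n / 2 + 2 * a - i :=
  ZMod.val_cast_of_lt (by omega)

theorem card_dom (hn : 3 ≤ n) (i : ℕ) (hi : i ≤ (n - 1) / 2) :
    (dom n i).card = ∑ j ∈ Finset.range (i + 1),
        Nat.choose (2 * j) j * Nat.choose (n - 1 - 2 * j) (i - j) := by
  unfold dom
  rw [Finset.card_sigma, ← main_identity n i (n / 2) (by omega) (by omega)]
  refine Finset.sum_congr rfl fun a ha => ?_
  have ha := Finset.mem_range.1 ha
  rw [Finset.card_product, Finset.card_powersetCard, Finset.card_powersetCard, card_lowS,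
    card_highS, val_kOf hn i a hi (by omega)]

theorem ncard_goodSet (hn : 3 ≤ n) (i : ℕ) (hi : i ≤ (n - 1) / 2) :
    (goodSet n i).ncard = (dom n i).card := by
  have himg : goodSet n i = (fun x : Σ _ : ℕ, Finset (ZMod n) × Finset (ZMod n) =>
      (kOf n i x.1, mkD (kOf n i x.1) x.2.1 x.2.2)) '' (dom n i : Set _) := by
    ext ⟨k, δ⟩
    rw [Set.mem_image]
    constructor
    · rintro ⟨hs, h0, hk, h1, ht⟩
      dsimp only at hs h0 hk h1 ht
      rw [sum_formula hs k hk] at h0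
      rw [card_tailSet] at ht
      have hsk := hs k
      have hkn := ZMod.val_lt k
      have hkv : k.val = n / 2 + 2 * (tailA δ k).card - i := by omega
      have hkk : kOf n i (tailA δ k).card = k := by
        unfold kOf
        rw [← hkv, ZMod.natCast_zmod_val]
      refine ⟨⟨(tailA δ k).card, tailA δ k, tailB δ k⟩, ?_, ?_⟩
      · unfold dom
        rw [Finset.mem_coe, Finset.mem_sigma, Finset.mem_product, Finset.mem_powersetCard,
          Finset.mem_powersetCard]
        dsimp only
        rw [hkk]
        refine ⟨Finset.mem_range.2 (by omega), ⟨?_, rfl⟩, ?_, by omega⟩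
        · intro e he
          simp only [tailA, lowS, Finset.mem_filter, Finset.mem_univ, true_and] at he ⊢
          exact he.1
        · intro e he
          simp only [tailB, highS, Finset.mem_filter, Finset.mem_univ, true_and] at he ⊢
          exact he.1
      · dsimp only
        rw [hkk]
        refine Prod.ext rfl ?_
        dsimp only
        funext e
        by_cases he : e = k
        · subst he
          rw [mkD_self]
          omega
        · have h2 := hk e he
          have h3 := hs e
          have h4 : e.val ≠ k.val := fun h => he (ZMod.val_injective n h)
          unfold mkD
          rw [if_neg he]
          simp only [tailA, tailB, Finset.mem_filter, Finset.mem_univ, true_and]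
          split_ifs <;> omega
    · rintro ⟨⟨a, A, B⟩, hx, he⟩
      unfold dom at hx
      rw [Finset.mem_coe, Finset.mem_sigma, Finset.mem_product, Finset.mem_powersetCard,
          Finset.mem_powersetCard] at hx
      obtain ⟨ha, ⟨hA, hAc⟩, hB, hBc⟩ := hx
      dsimp only at ha hA hAc hB hBc he
      have ha := Finset.mem_range.1 ha
      rw [← he]
      have hv := val_kOf hn i a hi (by omega)
      refine ⟨mkD_sgn _ _ _, ?_, mkD_ne _ _ _, ?_, ?_⟩
      · dsimp only
        rw [sum_formula (mkD_sgn _ _ _) _ (mkD_ne _ _ _), tailA_mkD _ _ _ hA, tailB_mkD _ _ _ hB,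
          mkD_self, hAc, hBc, hv]
        omega
      · dsimp only
        rw [mkD_self]
        omega
      · dsimp only
        rw [card_tailSet, tailA_mkD _ _ _ hA, tailB_mkD _ _ _ hB, hAc, hBc]
        omega
  rw [himg, Set.ncard_image_of_injOn, Set.ncard_coe_finset]
  rintro ⟨a, A, B⟩ hx ⟨a', A', B'⟩ hx' h
  unfold dom at hx hx'
  rw [Finset.mem_coe, Finset.mem_sigma, Finset.mem_product, Finset.mem_powersetCard,
      Finset.mem_powersetCard] at hx hx'
  obtain ⟨ha, ⟨hA, hAc⟩, hB, hBc⟩ := hx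
  obtain ⟨ha', ⟨hA', hAc'⟩, hB', hBc'⟩ := hx'
  dsimp only at ha hA hAc hB hBc ha' hA' hAc' hB' hBc' h
  have hk := congrArg Prod.fst h
  have hδ := congrArg Prod.snd h
  dsimp only at hk hδ
  have e1 := tailA_mkD _ A B hA
  have e2 := tailB_mkD _ A B hB
  rw [hδ, hk, tailA_mkD _ _ _ hA'] at e1
  rw [hδ, hk, tailB_mkD _ _ _ hB'] at e2
  subst e1 e2
  subst hAc
  subst hAc'
  rfl

theorem jaeger_set_eq (hn : 3 ≤ n)
    (ρ : ZMod n → ZMod n → ZMod n)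
    (hρ : ρ = fun x y : ZMod n => if y = x + 1 then x - 1 else x + 1) (i : ℕ) :
    {q : Set (ZMod n × ZMod n) × Set (ZMod n × ZMod n) |
        IsFacetGraph (SimpleGraph.fromRel (fun u v : ZMod n => v = u + 1)) q.1 ∧
          IsJaegerTree ρ 0 1 q.1 q.2 ∧ numTailEdges 0 q.2 = i} =
      (fun x : ZMod n × (ZMod n → ℤ) => (dirSet x.2, dirSet (Function.update x.2 x.1 0))) ''
        goodSet n i := by
  ext ⟨D, T⟩
  rw [Set.mem_ofPred_eq, Set.mem_image]
  dsimp only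
  constructor
  · rintro ⟨hD, hT, hi⟩
    rw [facet_iff hn] at hD
    obtain ⟨δ, hs, h0, -, rfl⟩ := hD
    obtain ⟨k, hk, rfl⟩ := (spanning_iff hn hs T).1 hT.1
    rw [jaeger_iff hn hs k hk ρ hρ] at hT
    rw [numTail_eq hn hs k hk] at hi
    exact ⟨(k, δ), ⟨hs, h0, hk, hT, hi⟩, rfl⟩
  · rintro ⟨⟨k, δ⟩, ⟨hs, h0, hk, hT, hi⟩, he⟩
    dsimp only at hs h0 hk hT hi he
    obtain ⟨rfl, rfl⟩ := Prod.mk.inj he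
    refine ⟨(facet_iff hn _).2 ⟨δ, hs, h0, ⟨k, hk⟩, rfl⟩, (jaeger_iff hn hs k hk ρ hρ).2 hT, ?_⟩
    rw [numTail_eq hn hs k hk, hi]

theorem injOn_good (hn : 3 ≤ n) (i : ℕ) :
    Set.InjOn (fun x : ZMod n × (ZMod n → ℤ) =>
      (dirSet x.2, dirSet (Function.update x.2 x.1 0))) (goodSet n i) := by
  rintro ⟨k, δ⟩ ⟨hs, _, hk, _, _⟩ ⟨k', δ'⟩ ⟨hs', _, hk', _, _⟩ h
  dsimp only at hs hk hs' hk' h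
  obtain ⟨h1, h2⟩ := Prod.mk.inj h
  have e1 := dirSet_inj hn hs hs' h1
  subst e1
  have e2 := dirSet_inj hn (isSgn_update hs k) (isSgn_update hs k') h2
  refine Prod.ext ?_ rfl
  dsimp only
  by_contra hne
  have h3 := congrFun e2 k
  rw [Function.update_self, Function.update_of_ne hne] at h3
  exact hk' k hne h3.symm

end Helpers

/-- For the cycle graph `C_n` (`n ≥ 3`) with its unique ribbon structure and the basis
`(v₀, v₀v₁)`, the total number of Jaeger trees with exactly `i` tail-edges over all facet
graphs of `C_n` is `∑_{j=0}^{i} C(2j, j) · C(n − 1 − 2j, i − j)`, for each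
`0 ≤ i ≤ ⌊(n−1)/2⌋`. -/
theorem cycle_jaeger_trees_with_i_tail_edges
    (n : ℕ) [NeZero n] (hn : 3 ≤ n)
    (Cn : SimpleGraph (ZMod n))
    (hCn : Cn = SimpleGraph.fromRel (fun u v : ZMod n => v = u + 1))
    (ρ : ZMod n → ZMod n → ZMod n)
    (hρ : ρ = fun x y : ZMod n => if y = x + 1 then x - 1 else x + 1) :
    ∀ i : ℕ, i ≤ (n - 1) / 2 →
      Nat.card {q : Set (ZMod n × ZMod n) × Set (ZMod n × ZMod n) //
        IsFacetGraph Cn q.1 ∧ IsJaegerTree ρ 0 1 q.1 q.2 ∧ numTailEdges 0 q.2 = i} =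
      ∑ j ∈ Finset.range (i + 1),
        Nat.choose (2 * j) j * Nat.choose (n - 1 - 2 * j) (i - j) := by
  intro i hi
  subst hCn
  rw [← card_dom hn i hi, ← ncard_goodSet hn i hi, ← Set.ncard_image_of_injOn (injOn_good hn i),
    ← jaeger_set_eq hn ρ hρ i]
  rfl

end SEP
end
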